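/- arXiv:1612.01754 — 6 statements merged into one kernel-verified Lean document; each statement's English description precedes it below -/
import Mathlib

section
/- Let n ≥ 2 be an integer and let r be a real number with r > 0. Then for every symmetric real n×n matrix h = (h_{ij}) one has (∑_{i=1}^n h_{ii})² ≤ ((n+r)/n)·∑_{i,j=1}^n h_{ij}² + ((n+r)(n²−n−r)/(rn))·∑_{i,j=1}^{n−1} h_{ij}². -/
/-!
Split the index set into `s` and its complement, the trace accordingly into `S + T`, and weight the
two parts by `a, b > 0`. Sedrakyan's lemma gives `(S + T)² / (a + b) ≤ S² / a + T² / b`, and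
Cauchy–Schwarz bounds `S²` and `T²` by the sums of squares of the two diagonal blocks. The second
block has at most what the first one leaves of the full sum of squares. The Casorati inequality is
the case in which the complement is a single index, with weights `a = r` and `b = n`.
-/

open Finset

section OrderedSums

variable {ι M : Type*} [Fintype ι] [DecidableEq ι]
  [AddCommMonoid M] [PartialOrder M] [IsOrderedAddMonoid M]

theorem sum_block_add_sum_compl_block_le_sum {f : ι → ι → M} (hf : ∀ i j, 0 ≤ f i j)
    (s : Finset ι) :
    ∑ i ∈ s, ∑ j ∈ s, f i j + ∑ i ∈ sᶜ, ∑ j ∈ sᶜ, f i j ≤ ∑ i, ∑ j, f i j := by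
  rw [← sum_add_sum_compl s fun i ↦ ∑ j, f i j]
  exact add_le_add (sum_le_sum fun i _ ↦ sum_le_univ_sum_of_nonneg (hf i))
    (sum_le_sum fun i _ ↦ sum_le_univ_sum_of_nonneg (hf i))

end OrderedSums

section MatrixTrace

variable {ι κ K : Type*} [Field K] [LinearOrder K] [IsStrictOrderedRing K]

theorem add_sq_div_add_le {a b : K} (ha : 0 < a) (hb : 0 < b) (x y : K) :
    (x + y) ^ 2 / (a + b) ≤ x ^ 2 / a + y ^ 2 / b := by
  simpa using sq_sum_div_le_sum_sq_div univ ![x, y] (g := ![a, b]) (by simp [ha, hb])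

theorem sq_sum_diag_le_card_mul_sum_sq {R : Type*} [CommRing R] [LinearOrder R]
    [IsStrictOrderedRing R] (h : Matrix ι ι R) (s : Finset ι) :
    (∑ i ∈ s, h i i) ^ 2 ≤ #s * ∑ i ∈ s, ∑ j ∈ s, h i j ^ 2 :=
  calc
    (∑ i ∈ s, h i i) ^ 2 ≤ #s * ∑ i ∈ s, h i i ^ 2 := sq_sum_le_card_mul_sum_sq
    _ ≤ #s * ∑ i ∈ s, ∑ j ∈ s, h i j ^ 2 := by
      gcongr with i hi
      exact single_le_sum (f := fun j ↦ h i j ^ 2) (fun _ _ ↦ sq_nonneg _) hi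

variable [Fintype ι]

theorem sq_sum_diag_div_add_le [DecidableEq ι] (h : Matrix ι ι K) (s : Finset ι) {a b : K}
    (ha : 0 < a) (hb : 0 < b) :
    (∑ i, h i i) ^ 2 / (a + b) ≤
      #s * (∑ i ∈ s, ∑ j ∈ s, h i j ^ 2) / a +
        #sᶜ * (∑ i, ∑ j, h i j ^ 2 - ∑ i ∈ s, ∑ j ∈ s, h i j ^ 2) / b := by
  have compl_block_le : ∑ i ∈ sᶜ, ∑ j ∈ sᶜ, h i j ^ 2 ≤
      ∑ i, ∑ j, h i j ^ 2 - ∑ i ∈ s, ∑ j ∈ s, h i j ^ 2 :=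
    le_sub_iff_add_le'.2 (sum_block_add_sum_compl_block_le_sum (fun i j ↦ sq_nonneg (h i j)) s)
  calc
    (∑ i, h i i) ^ 2 / (a + b) = (∑ i ∈ s, h i i + ∑ i ∈ sᶜ, h i i) ^ 2 / (a + b) := by
      rw [sum_add_sum_compl]
    _ ≤ (∑ i ∈ s, h i i) ^ 2 / a + (∑ i ∈ sᶜ, h i i) ^ 2 / b := add_sq_div_add_le ha hb _ _
    _ ≤ #s * (∑ i ∈ s, ∑ j ∈ s, h i j ^ 2) / a +
        #sᶜ * (∑ i ∈ sᶜ, ∑ j ∈ sᶜ, h i j ^ 2) / b := by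
      gcongr <;> exact sq_sum_diag_le_card_mul_sum_sq h _
    _ ≤ _ := by gcongr

theorem casorati_quadratic_ineq_general [Fintype κ] (h : Matrix ι ι K) (e : κ ↪ ι)
    (hcard : Fintype.card ι = Fintype.card κ + 1) {r : K} (hr : 0 < r) :
    (∑ i, h i i) ^ 2 ≤
      ((Fintype.card ι + r) / Fintype.card ι) * ∑ i, ∑ j, h i j ^ 2
        + ((Fintype.card ι + r) * ((Fintype.card ι : K) ^ 2 - Fintype.card ι - r) /
            (r * Fintype.card ι)) * ∑ i, ∑ j, h (e i) (e j) ^ 2 := by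
  classical
  have card_pos : (0 : K) < Fintype.card ι := by rw [hcard]; positivity
  have card_range : (#(univ.map e) : K) = Fintype.card ι - 1 := by simp [hcard]
  have card_compl_range : #(univ.map e)ᶜ = 1 := by simp [card_compl, hcard]
  have weighted_bound := sq_sum_diag_div_add_le h (univ.map e) hr card_pos
  rw [div_le_iff₀ (add_pos hr card_pos), card_range, card_compl_range] at weighted_bound
  simp only [sum_map] at weighted_bound
  refine weighted_bound.trans_eq ?_
  field_simp
  ring

end MatrixTrace

/-- For `n ≥ 2`, `r > 0` and any symmetric real `n × n` matrix `h`,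
`(∑ i, h i i)² ≤ ((n+r)/n) ∑_{i,j} h_{ij}² + ((n+r)(n²−n−r)/(rn)) ∑_{i,j ≤ n-1} h_{ij}²`. -/
theorem casorati_quadratic_ineq (n : ℕ) (hn : 2 ≤ n) (r : ℝ) (hr : 0 < r)
    (h : Matrix (Fin n) (Fin n) ℝ) (hsym : h.IsSymm) :
    (∑ i, h i i) ^ 2 ≤
      ((n + r) / n) * ∑ i, ∑ j, (h i j) ^ 2
        + ((n + r) * (n ^ 2 - n - r) / (r * n)) *
            ∑ i : Fin (n - 1), ∑ j : Fin (n - 1),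
              (h (Fin.castLE (by omega) i) (Fin.castLE (by omega) j)) ^ 2 := by
  simpa using casorati_quadratic_ineq_general h (Fin.castLEEmb (Nat.sub_le n 1))
    (by simp only [Fintype.card_fin]; omega) hr
end

section
/- Let n ≥ 2 be an integer and let r be a real number with r > 0. For a symmetric real n×n matrix h = (h_{ij}), equality (∑_{i=1}^n h_{ii})² = ((n+r)/n)·∑_{i,j=1}^n h_{ij}² + ((n+r)(n²−n−r)/(rn))·∑_{i,j=1}^{n−1} h_{ij}² holds if and only if there exists a real number a such that h_{ij} = 0 for all i ≠ j, h_{11} = h_{22} = ⋯ = h_{n−1,n−1} = a, and h_{nn} = (n(n−1)/r)·a. -/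
/-!
Write `h` as a square block `A` of size `n - 1`, bordered by the last row and column, with corner
entry `x`, and let `‖·‖` be the Frobenius norm. The right-hand side minus the left-hand side is
`((n+r)/r) ((n-1) ‖A‖² - (tr A)²) + ((n+r)/n) ∑ (border entries)² + (r/n) (x - n tr A / r)²`.
All three terms are nonnegative, the first by Cauchy-Schwarz for `A` against the identity matrix,
where equality means that `A` is scalar. So equality holds iff `A = a • 1`, the border vanishes,
and `x = n (n-1) a / r`.
-/

section Frobenius

variable {ι κ R K : Type*} [Fintype ι] [Fintype κ]

/-- The squared Frobenius norm `∑ i, ∑ j, A i j ^ 2` of a matrix, with values in the coefficient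
ring itself so that it makes sense over any ordered field. -/
def frobeniusSq [Semiring R] (A : Matrix ι κ R) : R :=
  ∑ i, ∑ j, A i j ^ 2

theorem frobeniusSq_sub_smul_one [DecidableEq ι] [CommRing R] (A : Matrix ι ι R) (c : R) :
    frobeniusSq (A - c • 1) = frobeniusSq A - 2 * c * A.trace + Fintype.card ι * c ^ 2 := by
  have entry_sq (i j : ι) : (A - c • 1) i j ^ 2 =
      A i j ^ 2 - (if i = j then 2 * c * A i j else 0) + if i = j then c ^ 2 else 0 := by
    by_cases hij : i = j
    · simp only [hij, Matrix.sub_apply, Matrix.smul_apply, Matrix.one_apply_eq,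
        smul_eq_mul, if_true]
      ring
    · simp [hij]
  simp only [frobeniusSq, entry_sq]
  simp [Matrix.trace, Finset.sum_add_distrib, Finset.mul_sum]

theorem card_mul_frobeniusSq_sub_trace_sq [DecidableEq ι] [Field K] [CharZero K]
    (A : Matrix ι ι K) :
    Fintype.card ι * frobeniusSq A - A.trace ^ 2 =
      Fintype.card ι * frobeniusSq (A - (A.trace / Fintype.card ι) • 1) := by
  cases isEmpty_or_nonempty ι
  · simp [Matrix.trace]
  · rw [frobeniusSq_sub_smul_one]
    field

variable [Field K] [LinearOrder K] [IsStrictOrderedRing K]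

theorem frobeniusSq_nonneg (A : Matrix ι κ K) : 0 ≤ frobeniusSq A :=
  Finset.sum_nonneg fun _ _ => Finset.sum_nonneg fun _ _ => sq_nonneg _

theorem frobeniusSq_eq_zero_iff {A : Matrix ι κ K} : frobeniusSq A = 0 ↔ A = 0 := by
  simp [frobeniusSq, ← Matrix.ext_iff, Fintype.sum_eq_zero_iff_of_nonneg, Pi.le_def,
    Finset.sum_nonneg, sq_nonneg, funext_iff]

theorem trace_sq_le_card_mul_frobeniusSq (A : Matrix ι ι K) :
    A.trace ^ 2 ≤ Fintype.card ι * frobeniusSq A := by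
  classical
  rw [← sub_nonneg, card_mul_frobeniusSq_sub_trace_sq]
  exact mul_nonneg (Nat.cast_nonneg _) (frobeniusSq_nonneg _)

theorem card_mul_frobeniusSq_eq_trace_sq_iff [DecidableEq ι] {A : Matrix ι ι K} :
    Fintype.card ι * frobeniusSq A = A.trace ^ 2 ↔ ∃ a : K, A = a • 1 := by
  cases isEmpty_or_nonempty ι
  · simp [Matrix.trace, eq_iff_true_of_subsingleton]
  · have card_ne_zero : (Fintype.card ι : K) ≠ 0 := Nat.cast_ne_zero.mpr Fintype.card_ne_zero
    rw [← sub_eq_zero, card_mul_frobeniusSq_sub_trace_sq, mul_eq_zero_iff_left card_ne_zero,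
      frobeniusSq_eq_zero_iff, sub_eq_zero]
    refine ⟨fun hA => ⟨_, hA⟩, ?_⟩
    rintro ⟨a, rfl⟩
    simp [card_ne_zero]

end Frobenius

section BorderedMatrix

variable {R K : Type*} {m : ℕ}

/-- The leading principal `m × m` submatrix of an `(m + 1) × (m + 1)` matrix: the restriction of a
bilinear form to the hyperplane spanned by the first `m` basis vectors. -/
def leadingBlock (h : Matrix (Fin (m + 1)) (Fin (m + 1)) R) : Matrix (Fin m) (Fin m) R :=
  h.submatrix Fin.castSucc Fin.castSucc

/-- The sum of the squares of the entries in the last row and the last column, leaving out the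
corner they share: the part of the squared Frobenius norm that couples the leading block to the
corner. -/
def borderSq [Semiring R] (h : Matrix (Fin (m + 1)) (Fin (m + 1)) R) : R :=
  ∑ i : Fin m, (h i.castSucc (Fin.last m) ^ 2 + h (Fin.last m) i.castSucc ^ 2)

theorem trace_eq_trace_leadingBlock_add [AddCommMonoid R]
    (h : Matrix (Fin (m + 1)) (Fin (m + 1)) R) :
    h.trace = (leadingBlock h).trace + h (Fin.last m) (Fin.last m) :=
  Fin.sum_univ_castSucc _

theorem frobeniusSq_eq_leadingBlock_add [Semiring R] (h : Matrix (Fin (m + 1)) (Fin (m + 1)) R) :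
    frobeniusSq h =
      frobeniusSq (leadingBlock h) + borderSq h + h (Fin.last m) (Fin.last m) ^ 2 := by
  simp only [frobeniusSq, leadingBlock, borderSq, Matrix.submatrix_apply, Fin.sum_univ_castSucc,
    Finset.sum_add_distrib]
  abel

theorem casorati_sub_trace_sq_eq [Field K] [CharZero K] {r : K} (hr : r ≠ 0)
    (h : Matrix (Fin (m + 1)) (Fin (m + 1)) K) :
    (m + 1 + r) / (m + 1) * frobeniusSq h
        + (m + 1 + r) * ((m + 1) ^ 2 - (m + 1) - r) / (r * (m + 1)) * frobeniusSq (leadingBlock h)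
        - h.trace ^ 2 =
      (m + 1 + r) / r * (m * frobeniusSq (leadingBlock h) - (leadingBlock h).trace ^ 2)
        + (m + 1 + r) / (m + 1) * borderSq h
        + r / (m + 1) *
            (h (Fin.last m) (Fin.last m) - (m + 1) * (leadingBlock h).trace / r) ^ 2 := by
  have : (m + 1 : K) ≠ 0 := Nat.cast_add_one_ne_zero m
  rw [frobeniusSq_eq_leadingBlock_add, trace_eq_trace_leadingBlock_add]
  field

variable [Field K] [LinearOrder K] [IsStrictOrderedRing K]

theorem borderSq_nonneg (h : Matrix (Fin (m + 1)) (Fin (m + 1)) K) : 0 ≤ borderSq h :=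
  Finset.sum_nonneg fun _ _ => add_nonneg (sq_nonneg _) (sq_nonneg _)

theorem borderSq_eq_zero_iff {h : Matrix (Fin (m + 1)) (Fin (m + 1)) K} :
    borderSq h = 0 ↔
      ∀ i : Fin m, h i.castSucc (Fin.last m) = 0 ∧ h (Fin.last m) i.castSucc = 0 := by
  simp [borderSq, Finset.sum_eq_zero_iff_of_nonneg, add_nonneg, sq_nonneg,
    add_eq_zero_iff_of_nonneg]

theorem leadingBlock_eq_smul_one_and_borderSq_eq_zero_iff
    {h : Matrix (Fin (m + 1)) (Fin (m + 1)) K} {a : K} :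
    leadingBlock h = a • 1 ∧ borderSq h = 0 ↔
      (∀ i j, i ≠ j → h i j = 0) ∧ ∀ i : Fin m, h i.castSucc i.castSucc = a := by
  rw [borderSq_eq_zero_iff]
  constructor
  · rintro ⟨block_eq, border_eq⟩
    have entry_eq (i j : Fin m) : h i.castSucc j.castSucc = if i = j then a else 0 := by
      simpa [leadingBlock, Matrix.one_apply] using congr_fun₂ block_eq i j
    simp +contextual [Fin.forall_fin_succ', entry_eq, border_eq]
  · rintro ⟨offDiag_eq, diag_eq⟩
    refine ⟨Matrix.ext fun i j => ?_, fun i => ⟨offDiag_eq _ _ i.castSucc_ne_last,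
      offDiag_eq _ _ i.castSucc_ne_last.symm⟩⟩
    obtain rfl | hij := eq_or_ne i j
    · simp [leadingBlock, diag_eq]
    · simp [leadingBlock, hij, offDiag_eq]

theorem trace_sq_eq_casorati_iff {r : K} (hr : 0 < r)
    (h : Matrix (Fin (m + 1)) (Fin (m + 1)) K) :
    h.trace ^ 2 = (m + 1 + r) / (m + 1) * frobeniusSq h
        + (m + 1 + r) * ((m + 1) ^ 2 - (m + 1) - r) / (r * (m + 1)) * frobeniusSq (leadingBlock h) ↔
      (∃ a : K, leadingBlock h = a • 1) ∧ borderSq h = 0 ∧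
        h (Fin.last m) (Fin.last m) = (m + 1) * (leadingBlock h).trace / r := by
  have defect_nonneg : 0 ≤ m * frobeniusSq (leadingBlock h) - (leadingBlock h).trace ^ 2 := by
    simpa using trace_sq_le_card_mul_frobeniusSq (leadingBlock h)
  have defect_eq_zero_iff : m * frobeniusSq (leadingBlock h) - (leadingBlock h).trace ^ 2 = 0 ↔
      ∃ a : K, leadingBlock h = a • 1 := by
    simpa [sub_eq_zero] using card_mul_frobeniusSq_eq_trace_sq_iff (A := leadingBlock h)
  have border_nonneg := borderSq_nonneg h
  have block_coeff : 0 < (m + 1 + r) / r := by positivity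
  have border_coeff : 0 < (m + 1 + r) / (m + 1) := by positivity
  have corner_coeff : 0 < r / (m + 1) := by positivity
  rw [eq_comm, ← sub_eq_zero, casorati_sub_trace_sq_eq hr.ne',
    add_eq_zero_iff_of_nonneg (by positivity) (by positivity),
    add_eq_zero_iff_of_nonneg (by positivity) (by positivity),
    mul_eq_zero_iff_left block_coeff.ne', mul_eq_zero_iff_left border_coeff.ne',
    mul_eq_zero_iff_left corner_coeff.ne', defect_eq_zero_iff, sq_eq_zero_iff, sub_eq_zero,
    and_assoc]

end BorderedMatrix

theorem casorati_quadratic_eq_iff_general {K : Type*} [Field K] [LinearOrder K]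
    [IsStrictOrderedRing K] (n : ℕ) (hn : 1 ≤ n) (r : K) (hr : 0 < r)
    (h : Matrix (Fin n) (Fin n) K) :
    (∑ i, h i i) ^ 2 =
      ((n + r) / n) * ∑ i, ∑ j, (h i j) ^ 2
        + ((n + r) * (n ^ 2 - n - r) / (r * n)) *
            ∑ i : Fin (n - 1), ∑ j : Fin (n - 1),
              (h (Fin.castLE (by omega) i) (Fin.castLE (by omega) j)) ^ 2
    ↔ ∃ a : K,
        (∀ i j : Fin n, i ≠ j → h i j = 0) ∧
        (∀ i : Fin n, (i : ℕ) < n - 1 → h i i = a) ∧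
        h ⟨n - 1, by omega⟩ ⟨n - 1, by omega⟩ = (n * (n - 1) / r) * a := by
  obtain ⟨m, rfl⟩ := Nat.exists_eq_add_of_le' hn
  have diag_iff (a : K) : (∀ i : Fin (m + 1), (i : ℕ) < m → h i i = a) ↔
      ∀ i : Fin m, h i.castSucc i.castSucc = a := by
    simp [Fin.forall_fin_succ']
  push_cast
  -- `Fin.castLE` along `m ≤ m + 1` is definitionally `Fin.castSucc`.
  refine (trace_sq_eq_casorati_iff hr h).trans ?_
  simp only [diag_iff, ← and_assoc,
    ← leadingBlock_eq_smul_one_and_borderSq_eq_zero_iff, ← exists_and_right]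
  refine exists_congr fun a => and_congr_right fun ⟨block_eq, _⟩ => ?_
  have corner_eq : (m + 1) * (leadingBlock h).trace / r = (m + 1) * (m + 1 - 1) / r * a := by
    rw [block_eq, Matrix.trace_smul, Matrix.trace_one, Fintype.card_fin, smul_eq_mul]
    ring
  rw [corner_eq]
  rfl

/-- For `n ≥ 2`, `r > 0` and a symmetric real `n × n` matrix `h`, equality
`(∑ i, h i i)² = ((n+r)/n) ∑_{i,j} h_{ij}² + ((n+r)(n²−n−r)/(rn)) ∑_{i,j ≤ n-1} h_{ij}²`
holds iff `h` is diagonal with `h_{11} = ⋯ = h_{n-1,n-1} = a` and `h_{nn} = (n(n-1)/r)·a`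
for some real `a`. -/
theorem casorati_quadratic_eq_iff (n : ℕ) (hn : 2 ≤ n) (r : ℝ) (hr : 0 < r)
    (h : Matrix (Fin n) (Fin n) ℝ) (hsym : h.IsSymm) :
    (∑ i, h i i) ^ 2 =
      ((n + r) / n) * ∑ i, ∑ j, (h i j) ^ 2
        + ((n + r) * (n ^ 2 - n - r) / (r * n)) *
            ∑ i : Fin (n - 1), ∑ j : Fin (n - 1),
              (h (Fin.castLE (by omega) i) (Fin.castLE (by omega) j)) ^ 2
    ↔ ∃ a : ℝ,
        (∀ i j : Fin n, i ≠ j → h i j = 0) ∧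
        (∀ i : Fin n, (i : ℕ) < n - 1 → h i i = a) ∧
        h ⟨n - 1, by omega⟩ ⟨n - 1, by omega⟩ = (n * (n - 1) / r) * a :=
  casorati_quadratic_eq_iff_general n (by omega) r hr h
end

section
/- Let n ≥ 2 be an integer, r > 0 a real number, and let A be a self-adjoint linear endomorphism of the n-dimensional real Euclidean space ℝⁿ (with its standard inner product ⟨·,·⟩). Then for every linear subspace L ⊆ ℝⁿ of dimension n−1 and every orthonormal basis (f₁,…,f_{n−1}) of L, one has (tr A)² ≤ ((n+r)/n)·tr(A²) + ((n+r)(n²−n−r)/(rn))·∑_{i,j=1}^{n−1} ⟨A f_i, f_j⟩². -/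
/-!
Complete `f` by a unit normal vector `ν` of the hyperplane, and write `tr A = a + t` with
`a = ⟪ν, A ν⟫` and `t` the trace of the block of `A` on the hyperplane. Young's inequality with
weight `r / n` gives `(a + t)² ≤ (1 + r/n) a² + (1 + n/r) t²`. If `S` denotes the sum of the squares
of the entries of the block, then `t² ≤ (n - 1) S` by Cauchy–Schwarz, and `a² ≤ tr (A† A) - S`
because the entries in the row and the column of `ν` only add to `tr (A† A)`.
The resulting coefficient of `S` is `(1 + n/r) (n - 1) - (1 + r/n) = (n + r) (n² - n - r) / (r n)`.
-/

open scoped RealInnerProductSpace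

open Module
open scoped InnerProductSpace

theorem add_sq_le_one_add_mul_sq {K : Type*} [Field K] [LinearOrder K] [IsStrictOrderedRing K]
    {ε : K} (hε : 0 < ε) (a b : K) :
    (a + b) ^ 2 ≤ (1 + ε) * a ^ 2 + (1 + ε⁻¹) * b ^ 2 := by
  linarith [two_mul_le_add_mul_sq (a := a) (b := b) hε, add_sq a b]

section Matrix

variable {R ι : Type*} [SeminormedAddCommGroup R] [Fintype ι]

theorem norm_matrix_trace_sq_le (M : Matrix ι ι R) :
    ‖M.trace‖ ^ 2 ≤ Fintype.card ι * ∑ i, ∑ j, ‖M i j‖ ^ 2 :=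
  calc
    ‖M.trace‖ ^ 2 ≤ (∑ i, ‖M i i‖) ^ 2 := by gcongr; exact norm_sum_le _ _
    _ ≤ Fintype.card ι * ∑ i, ‖M i i‖ ^ 2 := sq_sum_le_card_mul_sum_sq
    _ ≤ Fintype.card ι * ∑ i, ∑ j, ‖M i j‖ ^ 2 := by
      gcongr with i
      exact Finset.single_le_sum (f := fun j ↦ ‖M i j‖ ^ 2) (fun _ _ ↦ by positivity)
        (Finset.mem_univ i)

theorem norm_sq_none_add_sum_norm_sq_some_le (M : Matrix (Option ι) (Option ι) R) :
    ‖M none none‖ ^ 2 + ∑ i, ∑ j, ‖M (some i) (some j)‖ ^ 2 ≤ ∑ i, ∑ j, ‖M i j‖ ^ 2 := by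
  simp only [Fintype.sum_option]
  gcongr
  · exact le_add_of_nonneg_right (by positivity)
  · exact le_add_of_nonneg_left (by positivity)

theorem norm_matrix_trace_sq_le_of_option {ε : ℝ} (hε : 0 < ε)
    (M : Matrix (Option ι) (Option ι) R) :
    ‖M.trace‖ ^ 2 ≤ (1 + ε) * ∑ i, ∑ j, ‖M i j‖ ^ 2 +
      ((1 + ε⁻¹) * Fintype.card ι - (1 + ε)) * ∑ i, ∑ j, ‖M (some i) (some j)‖ ^ 2 := by
  let B : Matrix ι ι R := M.submatrix some some
  have trace_eq : M.trace = M none none + B.trace := Fintype.sum_option _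
  calc
    ‖M.trace‖ ^ 2 ≤ (‖M none none‖ + ‖B.trace‖) ^ 2 := by
      rw [trace_eq]; gcongr; exact norm_add_le _ _
    _ ≤ (1 + ε) * ‖M none none‖ ^ 2 + (1 + ε⁻¹) * ‖B.trace‖ ^ 2 :=
      add_sq_le_one_add_mul_sq hε _ _
    _ ≤ (1 + ε) * (∑ i, ∑ j, ‖M i j‖ ^ 2 - ∑ i, ∑ j, ‖B i j‖ ^ 2) +
          (1 + ε⁻¹) * (Fintype.card ι * ∑ i, ∑ j, ‖B i j‖ ^ 2) := by
      gcongr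
      · exact le_sub_right_of_add_le (norm_sq_none_add_sum_norm_sq_some_le M)
      · exact norm_matrix_trace_sq_le B
    _ = (1 + ε) * ∑ i, ∑ j, ‖M i j‖ ^ 2 +
          ((1 + ε⁻¹) * Fintype.card ι - (1 + ε)) * ∑ i, ∑ j, ‖B i j‖ ^ 2 := by ring

end Matrix

section InnerProductSpace

variable {𝕜 E F ι κ : Type*} [RCLike 𝕜]
  [NormedAddCommGroup E] [InnerProductSpace 𝕜 E] [FiniteDimensional 𝕜 E]
  [NormedAddCommGroup F] [InnerProductSpace 𝕜 F] [FiniteDimensional 𝕜 F]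

theorem trace_adjoint_comp_self_eq_sum_norm_inner_sq [Fintype ι] [Fintype κ]
    (A : E →ₗ[𝕜] F) (b : OrthonormalBasis ι 𝕜 E) (c : OrthonormalBasis κ 𝕜 F) :
    LinearMap.trace 𝕜 E (A.adjoint ∘ₗ A) =
      ((∑ k, ∑ i, ‖⟪c k, A (b i)⟫_𝕜‖ ^ 2 : ℝ) : 𝕜) := by
  rw [Finset.sum_comm, LinearMap.trace_eq_sum_inner _ b, RCLike.ofReal_sum]
  refine Finset.sum_congr rfl fun i _ ↦ ?_
  rw [LinearMap.comp_apply, LinearMap.adjoint_inner_right, inner_self_eq_norm_sq_to_K,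
    c.sum_sq_norm_inner_right, RCLike.ofReal_pow]

theorem exists_orthonormalBasis_comp_eq [Fintype κ] {f : ι → E} (hf : Orthonormal 𝕜 f)
    {g : ι → κ} (hg : g.Injective) (hcard : finrank 𝕜 E = Fintype.card κ) :
    ∃ b : OrthonormalBasis κ 𝕜 E, ∀ i, b (g i) = f i := by
  have hv : Orthonormal 𝕜 ((Set.range g).domRestrict (Function.extend g f 0)) := by
    convert hf.comp _ (Equiv.ofInjective g hg).symm.injective using 1
    ext ⟨_, i, rfl⟩
    simp [hg.extend_apply]
  obtain ⟨b, hb⟩ := hv.exists_orthonormalBasis_extension_of_card_eq hcard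
  exact ⟨b, fun i ↦ by rw [hb _ ⟨i, rfl⟩, hg.extend_apply]⟩

theorem casorati_hyperplane_ineq_general [Fintype ι] {n : ℕ}
    (hn : finrank 𝕜 E = n) (hι : Fintype.card ι + 1 = n) {r : ℝ} (hr : 0 < r) (A : E →ₗ[𝕜] E)
    {f : ι → E} (hf : Orthonormal 𝕜 f) :
    ‖LinearMap.trace 𝕜 E A‖ ^ 2 ≤
      ((n + r) / n) * RCLike.re (LinearMap.trace 𝕜 E (A.adjoint ∘ₗ A)) +
        ((n + r) * (n ^ 2 - n - r) / (r * n)) * ∑ i, ∑ j, ‖⟪f i, A (f j)⟫_𝕜‖ ^ 2 := by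
  obtain ⟨b, hb⟩ := exists_orthonormalBasis_comp_eq hf (Option.some_injective ι) (by simp [hn, hι])
  let M : Matrix (Option ι) (Option ι) 𝕜 := .of fun i j ↦ ⟪b i, A (b j)⟫_𝕜
  have trace_M : LinearMap.trace 𝕜 E A = M.trace := A.trace_eq_sum_inner b
  have n_pos : (0 : ℝ) < n := by rw [← hι]; positivity
  have card_eq : (Fintype.card ι : ℝ) = n - 1 := by simp [← hι]
  have coeff_trace : 1 + r / n = (n + r) / n := one_add_div n_pos.ne'
  have coeff_block : (1 + (r / n)⁻¹) * (n - 1) - (n + r) / n =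
      (n + r) * (n ^ 2 - n - r) / (r * n) := by
    field_simp
    ring
  have ineq := norm_matrix_trace_sq_le_of_option (div_pos hr n_pos) M
  rw [card_eq, coeff_trace, coeff_block] at ineq
  rw [trace_M, trace_adjoint_comp_self_eq_sum_norm_inner_sq A b b, RCLike.ofReal_re]
  simpa only [M, Matrix.of_apply, hb] using ineq

end InnerProductSpace

/-- For `n ≥ 2`, `r > 0`, a self-adjoint endomorphism `A` of `ℝⁿ`, any
hyperplane `L` (subspace of dimension `n-1`) and any orthonormal basis `f` of `L`,
`(tr A)² ≤ ((n+r)/n)·tr(A²) + ((n+r)(n²−n−r)/(rn))·∑_{i,j} ⟨A f_i, f_j⟩²`. -/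
theorem casorati_hyperplane_ineq (n : ℕ) (hn : 2 ≤ n) (r : ℝ) (hr : 0 < r)
    (A : EuclideanSpace ℝ (Fin n) →ₗ[ℝ] EuclideanSpace ℝ (Fin n))
    (hA : ∀ x y : EuclideanSpace ℝ (Fin n), ⟪A x, y⟫ = ⟪x, A y⟫)
    (L : Submodule ℝ (EuclideanSpace ℝ (Fin n)))
    (hL : Module.finrank ℝ L = n - 1)
    (f : OrthonormalBasis (Fin (n - 1)) ℝ L) :
    (LinearMap.trace ℝ _ A) ^ 2 ≤
      ((n + r) / n) * LinearMap.trace ℝ _ (A ∘ₗ A)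
        + ((n + r) * (n ^ 2 - n - r) / (r * n)) *
            ∑ i : Fin (n - 1), ∑ j : Fin (n - 1),
              (⟪A (f i : EuclideanSpace ℝ (Fin n)), (f j : EuclideanSpace ℝ (Fin n))⟫) ^ 2 := by
  have adjoint_A : A.adjoint = A := (LinearMap.isSymmetric_iff_isSelfAdjoint A).mp hA
  have orthonormal_f := f.orthonormal.comp_linearIsometry L.subtypeₗᵢ
  simpa [adjoint_A, hA] using casorati_hyperplane_ineq_general finrank_euclideanSpace_fin
    (by simp; omega) hr A orthonormal_f
end

section
/- Let n ≥ 2 be an integer, r a real number with 0 < r < n(n−1), and A a self-adjoint linear endomorphism of the n-dimensional real Euclidean space ℝⁿ. Define C := (1/n)·tr(A²), and for each (n−1)-dimensional subspace L of ℝⁿ define C(L) := (1/(n−1))·tr((P_L ∘ A ∘ P_L)²), where P_L is the orthogonal projection of ℝⁿ onto L. Then (tr A)² ≤ (n+r)·C + ((n−1)(n+r)(n²−n−r)/(rn))·inf{ C(L) : L an (n−1)-dimensional subspace of ℝⁿ }. -/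
/-!
Split `ℝⁿ = L ⊕ Lᗮ` with projections `P` and `Q = 1 - P`, and put `S = tr (PAP)`, `t = tr (QAQ)`, so
`tr A = S + t`. Cauchy–Schwarz for the trace form bounds `S²` by `(n - 1) tr ((PAP)²)` and `t²` by
`tr ((QAQ)²)`, while self-adjointness makes the off-diagonal part of `tr (A²)` nonnegative, so that
`tr ((PAP)²) + tr ((QAQ)²) ≤ tr (A²)`. Sedrakyan's inequality
`(S + t)² ≤ (r + n) (S² / r + t² / n)` then combines the two bounds with exactly the weights of the
theorem. The coefficient of `C(L)` is nonnegative for `r ≤ n (n - 1)`, which is what allows passing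
to the infimum.
-/

section CasoratiInequality

open LinearMap Module RCLike
open scoped Pointwise

lemma exists_submodule_finrank_eq {R M : Type*} [Ring R] [Nontrivial R] [StrongRankCondition R]
    [AddCommGroup M] [Module R M] {k : ℕ} (hk : k ≤ finrank R M) :
    ∃ L : Submodule R M, finrank R L = k := by
  obtain ⟨v, hv⟩ := exists_linearIndependent_of_le_finrank hk
  exact ⟨Submodule.span R (Set.range v), by rw [finrank_span_eq_card hv, Fintype.card_fin]⟩

lemma add_sq_le_add_mul_sq_div_add_sq_div {K : Type*} [Field K] [LinearOrder K]
    [IsStrictOrderedRing K] (x y : K) {a b : K} (ha : 0 < a) (hb : 0 < b) :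
    (x + y) ^ 2 ≤ (a + b) * (x ^ 2 / a + y ^ 2 / b) := by
  have sedrakyan := Finset.univ.sq_sum_div_le_sum_sq_div ![x, y] (g := ![a, b])
    (by simp [Fin.forall_fin_two, ha, hb])
  rw [← div_le_iff₀' (add_pos ha hb)]
  simpa using sedrakyan

section Idempotent

variable {R M : Type*} [CommRing R] [AddCommGroup M] [Module R M] {P Q : End R M}

lemma trace_mul_mul_of_isIdempotentElem (hP : IsIdempotentElem P) (A : End R M) :
    trace R M (P * A * P) = trace R M (A * P) := by
  rw [mul_assoc, trace_mul_comm, mul_assoc, hP.eq]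

lemma trace_corner_mul_corner (hP : IsIdempotentElem P) (hQ : IsIdempotentElem Q) (A : End R M) :
    trace R M (P * A * Q * (Q * A * P)) = trace R M (A * Q * A * P) := by
  have h : P * A * Q * (Q * A * P) = P * (A * (Q * Q) * A) * P := by noncomm_ring
  rw [h, hQ.eq, trace_mul_mul_of_isIdempotentElem hP]

lemma trace_eq_add_of_isIdempotentElem (hP : IsIdempotentElem P) (A : End R M) :
    trace R M A = trace R M (P * A * P) + trace R M ((1 - P) * A * (1 - P)) := by
  rw [trace_mul_mul_of_isIdempotentElem hP, trace_mul_mul_of_isIdempotentElem hP.one_sub,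
    ← map_add, ← mul_add, add_sub_cancel, mul_one]

lemma trace_mul_self_eq_add_of_isIdempotentElem (hP : IsIdempotentElem P) (A : End R M) :
    trace R M (A * A) = trace R M (P * A * P * (P * A * P))
      + trace R M ((1 - P) * A * (1 - P) * ((1 - P) * A * (1 - P)))
      + 2 * trace R M (P * A * (1 - P) * ((1 - P) * A * P)) := by
  have hcyclic : trace R M (A * P * A) = trace R M (A * A * P) := by
    rw [trace_mul_comm, mul_assoc]
  rw [trace_corner_mul_corner hP hP, trace_corner_mul_corner hP.one_sub hP.one_sub,
    trace_corner_mul_corner hP hP.one_sub]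
  simp only [mul_sub, sub_mul, mul_one, map_sub]
  linear_combination hcyclic

end Idempotent

variable {𝕜 E : Type*} [RCLike 𝕜] [NormedAddCommGroup E] [InnerProductSpace 𝕜 E]
  {A P S T : End 𝕜 E}

lemma isSymmetricProjection_one_sub (hP : P.IsSymmetricProjection) :
    (1 - P).IsSymmetricProjection :=
  ⟨hP.isIdempotentElem.one_sub, IsSymmetric.one.sub hP.isSymmetric⟩

variable [FiniteDimensional 𝕜 E]

lemma re_trace_adjoint_mul_self_nonneg (T : End 𝕜 E) : 0 ≤ re (trace 𝕜 E (adjoint T * T)) :=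
  (RCLike.nonneg_iff.mp T.isPositive_adjoint_comp_self.trace_nonneg).1

lemma re_trace_mul_self_nonneg (hT : T.IsSymmetric) : 0 ≤ re (trace 𝕜 E (T * T)) := by
  simpa only [hT.adjoint_eq] using re_trace_adjoint_mul_self_nonneg T

lemma sq_re_trace_mul_le (hS : S.IsSymmetric) (hT : T.IsSymmetric) :
    re (trace 𝕜 E (S * T)) ^ 2 ≤ re (trace 𝕜 E (S * S)) * re (trace 𝕜 E (T * T)) := by
  have quadratic_nonneg (x : ℝ) : 0 ≤ re (trace 𝕜 E (S * S)) * (x * x)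
      + 2 * re (trace 𝕜 E (S * T)) * x + re (trace 𝕜 E (T * T)) := by
    have h := re_trace_mul_self_nonneg ((hS.smul (conj_ofReal x)).add hT)
    simp only [add_mul, mul_add, smul_mul_assoc, mul_smul_comm, map_add, map_smul, smul_eq_mul,
      re_ofReal_mul, trace_mul_comm 𝕜 T S] at h
    linarith
  have h := discrim_le_zero quadratic_nonneg
  rw [discrim] at h
  linarith

lemma sq_re_trace_compression_le (hA : A.IsSymmetric) (hP : P.IsSymmetricProjection) :
    re (trace 𝕜 E (P * A * P)) ^ 2 ≤
      re (trace 𝕜 E P) * re (trace 𝕜 E (P * A * P * (P * A * P))) := by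
  have hPAP : (P * A * P).IsSymmetric := by
    simpa only [hP.isSymmetric.adjoint_eq] using! hA.conj_adjoint P
  have h := sq_re_trace_mul_le hP.isSymmetric hPAP
  rwa [hP.isIdempotentElem.eq, mul_assoc P A P, ← mul_assoc P P, hP.isIdempotentElem.eq,
    ← mul_assoc] at h

lemma re_trace_compression_mul_self_add_le (hA : A.IsSymmetric) (hP : P.IsSymmetricProjection) :
    re (trace 𝕜 E (P * A * P * (P * A * P)))
      + re (trace 𝕜 E ((1 - P) * A * (1 - P) * ((1 - P) * A * (1 - P))))
      ≤ re (trace 𝕜 E (A * A)) := by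
  have hadjoint : adjoint ((1 - P) * A * P) = P * A * (1 - P) := by
    simp only [End.mul_eq_comp, adjoint_comp, hA.adjoint_eq, hP.isSymmetric.adjoint_eq,
      (isSymmetricProjection_one_sub hP).isSymmetric.adjoint_eq, comp_assoc]
  have hoff := re_trace_adjoint_mul_self_nonneg ((1 - P) * A * P)
  rw [hadjoint] at hoff
  rw [trace_mul_self_eq_add_of_isIdempotentElem hP.isIdempotentElem A, map_add, map_add,
    two_mul, map_add]
  linarith

lemma sq_re_trace_le_of_isSymmetricProjection (hA : A.IsSymmetric) (hP : P.IsSymmetricProjection)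
    {a b : ℝ} (ha : 0 < a) (hb : 0 < b) :
    re (trace 𝕜 E A) ^ 2 ≤ (a + b) *
      (re (trace 𝕜 E P) * re (trace 𝕜 E (P * A * P * (P * A * P))) / a
        + re (trace 𝕜 E (1 - P)) *
          (re (trace 𝕜 E (A * A)) - re (trace 𝕜 E (P * A * P * (P * A * P)))) / b) := by
  have hQ := isSymmetricProjection_one_sub hP
  have htrQ : 0 ≤ re (trace 𝕜 E (1 - P)) := by
    simpa only [hQ.isIdempotentElem.eq] using re_trace_mul_self_nonneg hQ.isSymmetric
  rw [trace_eq_add_of_isIdempotentElem hP.isIdempotentElem A, map_add]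
  refine (add_sq_le_add_mul_sq_div_add_sq_div _ _ ha hb).trans ?_
  gcongr
  · exact sq_re_trace_compression_le hA hP
  · refine (sq_re_trace_compression_le hA hQ).trans ?_
    gcongr
    linarith [re_trace_compression_mul_self_add_le hA hP]

/-- The Casorati curvature `C(L) = (1 / dim L) tr ((P_L ∘ A ∘ P_L)²)` of a subspace `L` with respect
to the shape operator `A`; the Casorati curvature `C` of `A` itself is the case `L = ⊤`. For `L = ⊥`
the value is `0`. -/
noncomputable def casoratiCurvature (A : End 𝕜 E) (L : Submodule 𝕜 E) : ℝ :=
  (1 / finrank 𝕜 L : ℝ) *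
    re (trace 𝕜 E ((L.starProjection.toLinearMap ∘ₗ A ∘ₗ L.starProjection.toLinearMap) ∘ₗ
      (L.starProjection.toLinearMap ∘ₗ A ∘ₗ L.starProjection.toLinearMap)))

lemma trace_starProjection (L : Submodule 𝕜 E) :
    trace 𝕜 E L.starProjection.toLinearMap = finrank 𝕜 L :=
  IsProj.trace ⟨L.starProjection_apply_mem, fun _ ↦ L.starProjection_eq_self_iff.mpr⟩

lemma casoratiCurvature_top (A : End 𝕜 E) :
    casoratiCurvature A ⊤ = 1 / finrank 𝕜 E * re (trace 𝕜 E (A * A)) := by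
  rw [casoratiCurvature, finrank_top, Submodule.starProjection_top]
  rfl

lemma image_casoratiCurvature_setOf_finrank_eq (A : End 𝕜 E) (k : ℕ) :
    casoratiCurvature A '' {L | finrank 𝕜 L = k} =
      {c | ∃ L : Submodule 𝕜 E, finrank 𝕜 L = k ∧ c = (1 / k : ℝ) *
        re (trace 𝕜 E ((L.starProjection.toLinearMap ∘ₗ A ∘ₗ L.starProjection.toLinearMap) ∘ₗ
          (L.starProjection.toLinearMap ∘ₗ A ∘ₗ L.starProjection.toLinearMap)))} := by
  ext c
  refine exists_congr fun L ↦ and_congr_right fun (hL : finrank 𝕜 L = k) ↦ ?_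
  rw [casoratiCurvature, hL, eq_comm]

lemma sq_re_trace_le_casoratiCurvature (hA : A.IsSymmetric) {r : ℝ} (hr : 0 < r) {n : ℕ}
    (hn : 2 ≤ n) (hE : finrank 𝕜 E = n) {L : Submodule 𝕜 E} (hL : finrank 𝕜 L = n - 1) :
    re (trace 𝕜 E A) ^ 2 ≤ (n + r) * casoratiCurvature A ⊤
      + ((n - 1) * (n + r) * (n ^ 2 - n - r) / (r * n)) * casoratiCurvature A L := by
  have hn' : (2 : ℝ) ≤ n := by exact_mod_cast hn
  have hn1 : (n : ℝ) - 1 ≠ 0 := by linarith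
  have hL' : (finrank 𝕜 L : ℝ) = n - 1 := by rw [hL, Nat.cast_pred (by lia)]
  refine (sq_re_trace_le_of_isSymmetricProjection hA L.isSymmetricProjection_starProjection hr
    (b := n) (by linarith)).trans_eq ?_
  rw [casoratiCurvature_top, casoratiCurvature, hE, map_sub, trace_one, trace_starProjection, hE]
  simp only [map_sub, natCast_re, hL', End.mul_eq_comp, comp_assoc]
  field_simp
  ring

theorem casorati_delta_ineq_general {n : ℕ} (hE : finrank 𝕜 E = n) {r : ℝ} (hr : 0 < r)
    (hr' : r ≤ n * (n - 1)) (hA : A.IsSymmetric) :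
    re (trace 𝕜 E A) ^ 2 ≤ (n + r) * casoratiCurvature A ⊤
      + ((n - 1) * (n + r) * (n ^ 2 - n - r) / (r * n)) *
        sInf (casoratiCurvature A '' {L | finrank 𝕜 L = n - 1}) := by
  have hn : 2 ≤ n := by
    by_contra! h
    interval_cases n <;> norm_num at hr' <;> linarith
  have hn' : (2 : ℝ) ≤ n := by exact_mod_cast hn
  have hcoeff : 0 ≤ ((n : ℝ) - 1) * (n + r) * (n ^ 2 - n - r) / (r * n) := by
    have hn_sub_one : 0 ≤ (n : ℝ) - 1 := by linarith
    have hquadratic : 0 ≤ (n : ℝ) ^ 2 - n - r := by linarith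
    positivity
  have hnonempty : {L : Submodule 𝕜 E | finrank 𝕜 L = n - 1}.Nonempty :=
    exists_submodule_finrank_eq (hE ▸ n.sub_le 1)
  rw [← sub_le_iff_le_add', ← smul_eq_mul _ (sInf _), ← Real.sInf_smul_of_nonneg hcoeff]
  refine le_csInf (hnonempty.image _).smul_set ?_
  rintro _ ⟨_, ⟨L, hL, rfl⟩, rfl⟩
  exact sub_le_iff_le_add'.mpr (sq_re_trace_le_casoratiCurvature hA hr hn hE hL)

end CasoratiInequality

/-- For `n ≥ 2`, `0 < r < n(n-1)` and a self-adjoint endomorphism `A` of `ℝⁿ`,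
with `C := (1/n)·tr(A²)` and `C(L) := (1/(n-1))·tr((P_L ∘ A ∘ P_L)²)` for each
`(n-1)`-dimensional subspace `L` (where `P_L` is the orthogonal projection onto `L`),
`(tr A)² ≤ (n+r)·C + ((n-1)(n+r)(n²−n−r)/(rn))·inf { C(L) }`. -/
theorem casorati_delta_ineq (n : ℕ) (hn : 2 ≤ n) (r : ℝ) (hr : 0 < r)
    (hr' : r < n * (n - 1))
    (A : EuclideanSpace ℝ (Fin n) →ₗ[ℝ] EuclideanSpace ℝ (Fin n))
    (hA : ∀ x y : EuclideanSpace ℝ (Fin n),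
      inner ℝ (A x) y = (inner ℝ x (A y) : ℝ)) :
    (LinearMap.trace ℝ _ A) ^ 2 ≤
      (n + r) * ((1 / n) * LinearMap.trace ℝ _ (A ∘ₗ A))
        + ((n - 1) * (n + r) * (n ^ 2 - n - r) / (r * n)) *
            sInf { c : ℝ | ∃ L : Submodule ℝ (EuclideanSpace ℝ (Fin n)),
              Module.finrank ℝ L = n - 1 ∧
              c = (1 / (n - 1 : ℝ)) *
                LinearMap.trace ℝ _
                  (((L.subtypeL.comp (Submodule.orthogonalProjectionOnto L)).toLinearMap ∘ₗ A ∘ₗ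
                      (L.subtypeL.comp (Submodule.orthogonalProjectionOnto L)).toLinearMap) ∘ₗ
                   ((L.subtypeL.comp (Submodule.orthogonalProjectionOnto L)).toLinearMap ∘ₗ A ∘ₗ
                      (L.subtypeL.comp (Submodule.orthogonalProjectionOnto L)).toLinearMap)) } := by
  have h := casorati_delta_ineq_general finrank_euclideanSpace_fin hr hr'.le hA
  rw [casoratiCurvature_top, image_casoratiCurvature_setOf_finrank_eq, finrank_euclideanSpace_fin,
    Nat.cast_pred (by lia)] at h
  exact h
end

section
/- Let n ≥ 2 be an integer. For every symmetric real n×n matrix h = (h_{ij}) one has (∑_{i=1}^n h_{ii})² ≤ ((n+1)/2)·(∑_{i,j=1}^n h_{ij}² + ∑_{i,j=1}^{n−1} h_{ij}²), and equality holds if and only if there exists a real number a such that h_{ij} = 0 for all i ≠ j, h_{11} = ⋯ = h_{n−1,n−1} = a, and h_{nn} = 2a. -/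
/-!
The right-hand side is `(∑ (w i i)⁻¹) * ∑ w i j * h i j ^ 2`, where `w` is `1` on the last row and
column and `2` elsewhere: the diagonal of `w` accounts for the constant `(n + 1) / 2`.
The inequality is then the weighted Cauchy-Schwarz inequality on the diagonal, after discarding
the off-diagonal entries. Equality forces the discarded entries to vanish and `w i i * h i i` to
be independent of `i`.
-/

open Finset

section DiagonalSum

variable {ι M : Type*} [Fintype ι] [AddCommMonoid M] [PartialOrder M] {f : ι → ι → M}

theorem sum_diag_le_sum_sum [IsOrderedAddMonoid M] (hf : ∀ i j, 0 ≤ f i j) :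
    ∑ i, f i i ≤ ∑ i, ∑ j, f i j :=
  sum_le_sum fun i _ => single_le_sum (fun j _ => hf i j) (mem_univ i)

theorem sum_diag_eq_sum_sum_iff [IsOrderedCancelAddMonoid M] (hf : ∀ i j, 0 ≤ f i j) :
    ∑ i, f i i = ∑ i, ∑ j, f i j ↔ ∀ i j, i ≠ j → f i j = 0 := by
  classical
  have row_eq_iff (i : ι) : f i i = ∑ j, f i j ↔ ∀ j, i ≠ j → f i j = 0 := by
    rw [← add_sum_erase univ (f i) (mem_univ i), left_eq_add,
      sum_eq_zero_iff_of_nonneg fun j _ => hf i j]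
    simp only [mem_erase, mem_univ, and_true, ne_comm]
  rw [sum_eq_sum_iff_of_le fun i _ => single_le_sum (fun j _ => hf i j) (mem_univ i)]
  simp only [mem_univ, forall_const, row_eq_iff]

end DiagonalSum

section Weighted

variable {ι K : Type*} [Field K]

theorem sum_mul_sub_div_sq {s : Finset ι} {w : ι → K} (hw : ∀ i ∈ s, w i ≠ 0)
    (x : ι → K) (a : K) :
    ∑ i ∈ s, w i * (x i - a / w i) ^ 2 =
      ∑ i ∈ s, w i * x i ^ 2 - 2 * a * ∑ i ∈ s, x i + a ^ 2 * ∑ i ∈ s, (w i)⁻¹ := by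
  rw [mul_sum, mul_sum, ← sum_sub_distrib, ← sum_add_distrib]
  refine sum_congr rfl fun i hi => ?_
  have hwi : w i ≠ 0 := hw i hi
  field_simp
  ring

variable [LinearOrder K] [IsStrictOrderedRing K]

theorem sq_sum_le_sum_inv_mul_sum_mul_sq {s : Finset ι} {w : ι → K} (hw : ∀ i ∈ s, 0 < w i)
    (x : ι → K) : (∑ i ∈ s, x i) ^ 2 ≤ (∑ i ∈ s, (w i)⁻¹) * ∑ i ∈ s, w i * x i ^ 2 :=
  sum_sq_le_sum_mul_sum_of_sq_le_mul s (fun i hi => (inv_pos.2 (hw i hi)).le)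
    (fun i hi => mul_nonneg (hw i hi).le (sq_nonneg _))
    fun i hi => (inv_mul_cancel_left₀ (hw i hi).ne' _).ge

theorem sq_sum_eq_sum_inv_mul_sum_mul_sq_iff {s : Finset ι} {w : ι → K}
    (hw : ∀ i ∈ s, 0 < w i) (x : ι → K) :
    (∑ i ∈ s, x i) ^ 2 = (∑ i ∈ s, (w i)⁻¹) * ∑ i ∈ s, w i * x i ^ 2 ↔
      ∃ a, ∀ i ∈ s, w i * x i = a := by
  rcases s.eq_empty_or_nonempty with rfl | hs
  · simp
  constructor
  · intro heq
    have inv_sum_pos : 0 < ∑ i ∈ s, (w i)⁻¹ := sum_pos (fun i hi => inv_pos.2 (hw i hi)) hs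
    obtain ⟨a, ha⟩ : ∃ a, ∑ i ∈ s, x i = (∑ i ∈ s, (w i)⁻¹) * a :=
      ⟨_, (mul_div_cancel₀ _ inv_sum_pos.ne').symm⟩
    have deviation_eq_zero : ∑ i ∈ s, w i * (x i - a / w i) ^ 2 = 0 := by
      rw [sum_mul_sub_div_sq fun i hi => (hw i hi).ne']
      refine mul_left_cancel₀ inv_sum_pos.ne' ?_
      linear_combination -heq + (∑ i ∈ s, x i - a * ∑ i ∈ s, (w i)⁻¹) * ha
    rw [sum_eq_zero_iff_of_nonneg fun i hi => mul_nonneg (hw i hi).le (sq_nonneg _)]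
      at deviation_eq_zero
    refine ⟨a, fun i hi => ?_⟩
    have hx : x i - a / w i = 0 := by
      simpa [(hw i hi).ne'] using deviation_eq_zero i hi
    rw [sub_eq_zero.1 hx, mul_div_cancel₀ _ (hw i hi).ne']
  · rintro ⟨a, ha⟩
    have hx : ∑ i ∈ s, x i = (∑ i ∈ s, (w i)⁻¹) * a := by
      rw [sum_mul]
      exact sum_congr rfl fun i hi => by rw [← ha i hi, inv_mul_cancel_left₀ (hw i hi).ne']
    have hwx : ∑ i ∈ s, w i * x i ^ 2 = a * ∑ i ∈ s, x i := by
      rw [mul_sum]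
      exact sum_congr rfl fun i hi => by rw [← ha i hi]; ring
    rw [hwx, hx]
    ring

variable [Fintype ι] {w : Matrix ι ι K}

theorem sq_trace_le_sum_inv_mul_sum_mul_sq (hw : ∀ i j, 0 < w i j) (h : Matrix ι ι K) :
    h.trace ^ 2 ≤ (∑ i, (w i i)⁻¹) * ∑ i, ∑ j, w i j * h i j ^ 2 :=
  calc
    h.trace ^ 2 ≤ (∑ i, (w i i)⁻¹) * ∑ i, w i i * h i i ^ 2 :=
      sq_sum_le_sum_inv_mul_sum_mul_sq (fun i _ => hw i i) _
    _ ≤ (∑ i, (w i i)⁻¹) * ∑ i, ∑ j, w i j * h i j ^ 2 :=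
      mul_le_mul_of_nonneg_left
        (sum_diag_le_sum_sum fun i j => mul_nonneg (hw i j).le (sq_nonneg (h i j)))
        (sum_nonneg fun i _ => (inv_pos.2 (hw i i)).le)

theorem sq_trace_eq_sum_inv_mul_sum_mul_sq_iff (hw : ∀ i j, 0 < w i j) (h : Matrix ι ι K) :
    h.trace ^ 2 = (∑ i, (w i i)⁻¹) * ∑ i, ∑ j, w i j * h i j ^ 2 ↔
      h.IsDiag ∧ ∃ a, ∀ i, w i i * h i i = a := by
  cases isEmpty_or_nonempty ι
  · simp [h.isDiag_of_subsingleton, Matrix.trace]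
  have hwh (i j : ι) : 0 ≤ w i j * h i j ^ 2 := mul_nonneg (hw i j).le (sq_nonneg _)
  have inv_sum_pos : 0 < ∑ i, (w i i)⁻¹ :=
    sum_pos (fun i _ => inv_pos.2 (hw i i)) univ_nonempty
  have trace_le : h.trace ^ 2 ≤ (∑ i, (w i i)⁻¹) * ∑ i, w i i * h i i ^ 2 :=
    sq_sum_le_sum_inv_mul_sum_mul_sq (fun i _ => hw i i) h.diag
  have diag_le := mul_le_mul_of_nonneg_left (sum_diag_le_sum_sum hwh) inv_sum_pos.le
  have trace_eq_iff : h.trace ^ 2 = (∑ i, (w i i)⁻¹) * ∑ i, w i i * h i i ^ 2 ↔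
      ∃ a, ∀ i, w i i * h i i = a := by
    simpa using! sq_sum_eq_sum_inv_mul_sum_mul_sq_iff (s := univ) (fun i _ => hw i i) h.diag
  have diag_eq_iff : (∑ i, (w i i)⁻¹) * ∑ i, w i i * h i i ^ 2 =
      (∑ i, (w i i)⁻¹) * ∑ i, ∑ j, w i j * h i j ^ 2 ↔ h.IsDiag := by
    simp [mul_right_inj' inv_sum_pos.ne', sum_diag_eq_sum_sum_iff hwh, (hw _ _).ne',
      Matrix.IsDiag, Pairwise]
  constructor
  · intro heq
    exact ⟨diag_eq_iff.1 (diag_le.antisymm (heq.ge.trans trace_le)),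
      trace_eq_iff.1 (trace_le.antisymm (diag_le.trans heq.ge))⟩
  · rintro ⟨hdiag, hconst⟩
    exact (trace_eq_iff.2 hconst).trans (diag_eq_iff.2 hdiag)

end Weighted

section Casorati

variable {n : ℕ}

/-- The multiplicity of each entry in the sum of the squared norms of a matrix of size `n + 1` and
of its leading principal block of size `n`. -/
def casoratiWeight (R : Type*) [CommSemiring R] (n : ℕ) : Matrix (Fin (n + 1)) (Fin (n + 1)) R :=
  fun i j => if i = Fin.last n ∨ j = Fin.last n then 1 else 2

theorem sum_casoratiWeight_mul {R : Type*} [CommSemiring R] (f : Fin (n + 1) → Fin (n + 1) → R) :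
    ∑ i, ∑ j, casoratiWeight R n i j * f i j =
      ∑ i, ∑ j, f i j + ∑ i : Fin n, ∑ j : Fin n, f i.castSucc j.castSucc := by
  simp only [casoratiWeight, ite_mul, one_mul, Fin.sum_univ_castSucc, Fin.castSucc_ne_last,
    or_false, sum_ite_irrel, ← mul_sum, or_true, ↓reduceIte, sum_add_distrib]
  ring

variable {K : Type*} [Field K] [LinearOrder K] [IsStrictOrderedRing K]

theorem casoratiWeight_pos (i j : Fin (n + 1)) : 0 < casoratiWeight K n i j := by
  unfold casoratiWeight
  split_ifs <;> norm_num

theorem sum_inv_casoratiWeight_diag :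
    ∑ i, (casoratiWeight K n i i)⁻¹ = ((n + 1 : ℕ) + 1) / 2 := by
  simp only [casoratiWeight, or_self, Fin.sum_univ_castSucc, Fin.castSucc_ne_last, ↓reduceIte,
    sum_const, card_univ, Fintype.card_fin, nsmul_eq_mul, inv_one, Nat.cast_add, Nat.cast_one]
  ring

theorem casoratiWeight_mul_diag_eq_iff (h : Matrix (Fin (n + 1)) (Fin (n + 1)) K) (a : K) :
    (∀ i, casoratiWeight K n i i * h i i = 2 * a) ↔
      (∀ i : Fin (n + 1), (i : ℕ) < n → h i i = a) ∧ h (Fin.last n) (Fin.last n) = 2 * a := by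
  simp [Fin.forall_fin_succ', casoratiWeight]

theorem casorati_normalized_delta_general (h : Matrix (Fin (n + 1)) (Fin (n + 1)) K) :
    h.trace ^ 2 ≤ ((n + 1 : ℕ) + 1) / 2 *
        (∑ i, ∑ j, h i j ^ 2 + ∑ i : Fin n, ∑ j : Fin n, h i.castSucc j.castSucc ^ 2) ∧
      (h.trace ^ 2 = ((n + 1 : ℕ) + 1) / 2 *
          (∑ i, ∑ j, h i j ^ 2 + ∑ i : Fin n, ∑ j : Fin n, h i.castSucc j.castSucc ^ 2) ↔
        ∃ a, h.IsDiag ∧ (∀ i : Fin (n + 1), (i : ℕ) < n → h i i = a) ∧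
          h (Fin.last n) (Fin.last n) = 2 * a) := by
  rw [← sum_inv_casoratiWeight_diag, ← sum_casoratiWeight_mul fun i j => h i j ^ 2]
  refine ⟨sq_trace_le_sum_inv_mul_sum_mul_sq casoratiWeight_pos h, ?_⟩
  -- The common value of `w i i * h i i` is `2 * a`.
  rw [sq_trace_eq_sum_inv_mul_sum_mul_sq_iff casoratiWeight_pos h, exists_and_left,
    (mul_left_surjective₀ (two_ne_zero' K)).exists]
  simp only [casoratiWeight_mul_diag_eq_iff]

end Casorati

/-- For `n ≥ 2` and a symmetric real `n × n` matrix `h`,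
`(∑ i, h i i)² ≤ ((n+1)/2)·(∑_{i,j} h_{ij}² + ∑_{i,j ≤ n-1} h_{ij}²)`, with equality iff
`h` is diagonal with `h_{11} = ⋯ = h_{n-1,n-1} = a` and `h_{nn} = 2a` for some real `a`. -/
theorem casorati_normalized_delta (n : ℕ) (hn : 2 ≤ n)
    (h : Matrix (Fin n) (Fin n) ℝ) (hsym : h.IsSymm) :
    (∑ i, h i i) ^ 2 ≤
      ((n + 1) / 2 : ℝ) *
        (∑ i, ∑ j, (h i j) ^ 2
          + ∑ i : Fin (n - 1), ∑ j : Fin (n - 1),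
              (h (Fin.castLE (by omega) i) (Fin.castLE (by omega) j)) ^ 2)
    ∧ ((∑ i, h i i) ^ 2 =
        ((n + 1) / 2 : ℝ) *
          (∑ i, ∑ j, (h i j) ^ 2
            + ∑ i : Fin (n - 1), ∑ j : Fin (n - 1),
                (h (Fin.castLE (by omega) i) (Fin.castLE (by omega) j)) ^ 2)
      ↔ ∃ a : ℝ,
          (∀ i j : Fin n, i ≠ j → h i j = 0) ∧
          (∀ i : Fin n, (i : ℕ) < n - 1 → h i i = a) ∧
          h ⟨n - 1, by omega⟩ ⟨n - 1, by omega⟩ = 2 * a) := by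
  obtain ⟨m, rfl⟩ : ∃ m, n = m + 1 := ⟨n - 1, by omega⟩
  exact casorati_normalized_delta_general h
end

section
/- Let V be a finite-dimensional real inner product space with dim V ≥ 1, let K be an orthogonal complex structure on V (a linear isometry with K² = −id), let e ∈ V be a unit vector, and let (e₁,…,e_n) be an orthonormal basis of the orthogonal complement of e in V, where n = dim V − 1. Then ∑_{i,j=1}^n ⟨e_i, K e_j⟩² = n − 1. -/
open scoped RealInnerProductSpace

/-!
In an orthonormal basis of `V` that extends `(e₁, …, eₙ)` by `e`, the matrix of an isometry `K` has
columns and rows of norm one. Summing the squared entries over the columns of the `eⱼ` gives `n`;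
removing those in the row of `e` subtracts `1 - ⟪e, K e⟫²`. When `K` is an orthogonal complex
structure it is skew-adjoint, so `⟪e, K e⟫ = 0`.
-/

section RCLike

open scoped InnerProductSpace

variable {𝕜 V ι : Type*} [RCLike 𝕜] [NormedAddCommGroup V] [InnerProductSpace 𝕜 V] [Fintype ι]

theorem sum_sq_norm_inner_eq_sq_norm_starProjection {U : Submodule 𝕜 V}
    [U.HasOrthogonalProjection] (b : OrthonormalBasis ι 𝕜 U) (v : V) :
    ∑ i, ‖⟪(b i : V), v⟫_𝕜‖ ^ 2 = ‖U.starProjection v‖ ^ 2 := by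
  simpa only [Submodule.inner_orthogonalProjectionOnto_eq_of_mem_left, Submodule.norm_coe,
    Submodule.starProjection_apply] using
    b.sum_sq_norm_inner_right (U.orthogonalProjectionOnto v)

theorem sum_sq_norm_inner_orthogonal_singleton {e : V} (he : ‖e‖ = 1)
    (b : OrthonormalBasis ι 𝕜 (𝕜 ∙ e)ᗮ) (v : V) :
    ∑ i, ‖⟪(b i : V), v⟫_𝕜‖ ^ 2 = ‖v‖ ^ 2 - ‖⟪e, v⟫_𝕜‖ ^ 2 := by
  rw [sum_sq_norm_inner_eq_sq_norm_starProjection,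
    Submodule.norm_sq_eq_add_norm_sq_starProjection v (𝕜 ∙ e),
    Submodule.starProjection_unit_singleton 𝕜 he, norm_smul, he, mul_one, add_sub_cancel_left]

theorem sum_sq_inner_complexStructure_general (K : V ≃ₗᵢ[𝕜] V) {e : V} (he : ‖e‖ = 1)
    (b : OrthonormalBasis ι 𝕜 (𝕜 ∙ e)ᗮ) :
    ∑ i, ∑ j, ‖⟪(b i : V), K (b j)⟫_𝕜‖ ^ 2 = Fintype.card ι - 1 + ‖⟪e, K e⟫_𝕜‖ ^ 2 := by
  have column (j : ι) :
      ∑ i, ‖⟪(b i : V), K (b j)⟫_𝕜‖ ^ 2 = 1 - ‖⟪e, K (b j)⟫_𝕜‖ ^ 2 := by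
    rw [sum_sq_norm_inner_orthogonal_singleton he, K.norm_map, Submodule.norm_coe, b.norm_eq_one,
      one_pow]
  have inner_flip (v : V) : ‖⟪e, K v⟫_𝕜‖ = ‖⟪v, K.symm e⟫_𝕜‖ := by
    rw [norm_inner_symm, K.inner_map_eq_flip]
  have row : ∑ j, ‖⟪e, K (b j)⟫_𝕜‖ ^ 2 = 1 - ‖⟪e, K e⟫_𝕜‖ ^ 2 := by
    simp only [inner_flip]
    rw [sum_sq_norm_inner_orthogonal_singleton he, K.symm.norm_map, he, one_pow]
  calc ∑ i, ∑ j, ‖⟪(b i : V), K (b j)⟫_𝕜‖ ^ 2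
      = ∑ j, (1 - ‖⟪e, K (b j)⟫_𝕜‖ ^ 2) := by rw [Finset.sum_comm]; simp only [column]
    _ = Fintype.card ι - (1 - ‖⟪e, K e⟫_𝕜‖ ^ 2) := by simp [Finset.sum_sub_distrib, row]
    _ = Fintype.card ι - 1 + ‖⟪e, K e⟫_𝕜‖ ^ 2 := by ring

theorem inner_map_right_eq_neg_of_comp_self_eq_neg_id {K : V →ₗ[𝕜] V}
    (hKiso : ∀ x y : V, ⟪K x, K y⟫_𝕜 = ⟪x, y⟫_𝕜) (hKsq : K ∘ₗ K = -LinearMap.id) (x y : V) :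
    ⟪x, K y⟫_𝕜 = -⟪K x, y⟫_𝕜 := by
  have hKK : K (K y) = -y := LinearMap.congr_fun hKsq y
  rw [← hKiso x (K y), hKK, inner_neg_right]

end RCLike

theorem real_inner_map_self_eq_zero_of_comp_self_eq_neg_id {V : Type*} [NormedAddCommGroup V]
    [InnerProductSpace ℝ V] {K : V →ₗ[ℝ] V} (hKiso : ∀ x y : V, ⟪K x, K y⟫ = ⟪x, y⟫)
    (hKsq : K ∘ₗ K = -LinearMap.id) (x : V) : ⟪x, K x⟫ = 0 := by
  have skew : ⟪x, K x⟫ = -⟪K x, x⟫ := inner_map_right_eq_neg_of_comp_self_eq_neg_id hKiso hKsq x x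
  rwa [real_inner_comm x (K x), self_eq_neg] at skew

/-- If `K` is an orthogonal complex structure on a finite-dimensional real
inner product space `V` with `dim V ≥ 1`, `e` a unit vector and `(e₁,…,e_n)` an
orthonormal basis of the orthogonal complement of `e` (`n = dim V − 1`), then
`∑_{i,j} ⟨e_i, K e_j⟩² = n − 1`. -/
theorem sum_sq_inner_complexStructure
    (V : Type*) [NormedAddCommGroup V] [InnerProductSpace ℝ V] [FiniteDimensional ℝ V]
    (hV : 1 ≤ Module.finrank ℝ V)
    (K : V →ₗ[ℝ] V)
    (hKiso : ∀ x y : V, ⟪K x, K y⟫ = ⟪x, y⟫)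
    (hKsq : K ∘ₗ K = -LinearMap.id)
    (e : V) (he : ‖e‖ = 1)
    (n : ℕ) (hn : n = Module.finrank ℝ V - 1)
    (b : OrthonormalBasis (Fin n) ℝ ((ℝ ∙ e)ᗮ : Submodule ℝ V)) :
    ∑ i, ∑ j, ⟪(b i : V), K (b j : V)⟫ ^ 2 = (n : ℝ) - 1 := by
  simpa [real_inner_map_self_eq_zero_of_comp_self_eq_neg_id hKiso hKsq e] using
    sum_sq_inner_complexStructure_general ((K.isometryOfInner hKiso).toLinearIsometryEquiv rfl) he b
end
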